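/- arXiv:2005.05047 — 2 statements merged into one kernel-verified Lean document; each statement's English description precedes it below -/
import Mathlib

section
/- The pair (Γ_⊙, τ) is a stable translation quiver: τ is a bijection of the vertex set 𝔈 of Γ_⊙, and for all tagged edges M, N the number of arrows M → N in Γ_⊙ equals the number of arrows τ(N) → M. -/
/-- A candidate tagged edge of the punctured polygon with `N` boundary vertices:
a start `a`, an end `b` (vertices modelled by `ZMod N`) and a tag `ε`. -/
structure TaggedEdge (N : ℕ) where
  a : ZMod N
  b : ZMod N
  ε : ℤ

/-- `|δ_{a,b}|`, the number of vertices on the counterclockwise boundary path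
from `a` to `b` (equal to `((b - a) mod N) + 1` if `a ≠ b`, and `N + 1` if `a = b`). -/
def deltaLen {N : ℕ} (a b : ZMod N) : ℕ :=
  if a = b then N + 1 else (b - a).val + 1

/-- The set `𝔈` of tagged edges of `P_N` (with parameter `n`): triples `M_{a,b}^ε`
with `|δ_{a,b}| ≥ N − n + 3`, `ε ∈ {1, −1}` and `ε = 1` whenever `a ≠ b`. -/
def Edges (n N : ℕ) : Set (TaggedEdge N) :=
  {M | N - n + 3 ≤ deltaLen M.a M.b ∧ (M.ε = 1 ∨ M.ε = -1) ∧ (M.a ≠ M.b → M.ε = 1)}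

/-- The translation `τ` on tagged edges: `τ M_{a,b} = M_{a−1,b−1}` for `a ≠ b`,
and `τ M_{a,a}^ε = M_{a−1,a−1}^{−ε}`. -/
def tr {N : ℕ} (M : TaggedEdge N) : TaggedEdge N :=
  if M.a = M.b then ⟨M.a - 1, M.b - 1, -M.ε⟩ else ⟨M.a - 1, M.b - 1, M.ε⟩

/-- Elementary moves between tagged edges of `P_N` (with parameter `n`). -/
def ElemMove (n N : ℕ) (M M' : TaggedEdge N) : Prop :=
  (deltaLen M.a M.b = N - n + 3 ∧ M' = ⟨M.a, M.b + 1, 1⟩) ∨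
  (N - n + 4 ≤ deltaLen M.a M.b ∧ deltaLen M.a M.b ≤ N - 1 ∧
    (M' = ⟨M.a + 1, M.b, 1⟩ ∨ M' = ⟨M.a, M.b + 1, 1⟩)) ∨
  (deltaLen M.a M.b = N ∧
    (M' = ⟨M.a + 1, M.b, 1⟩ ∨ M' = ⟨M.a, M.a, 1⟩ ∨ M' = ⟨M.a, M.a, -1⟩)) ∨
  (M.a = M.b ∧ M' = ⟨M.a + 1, M.a, 1⟩)

attribute [ext] TaggedEdge

theorem deltaLen_self {N : ℕ} (a : ZMod N) : deltaLen a a = N + 1 := if_pos rfl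

theorem deltaLen_sub_one {N : ℕ} (a b : ZMod N) : deltaLen (a - 1) (b - 1) = deltaLen a b := by
  simp [deltaLen]

theorem deltaLen_le_of_ne {N : ℕ} [NeZero N] {a b : ZMod N} (h : a ≠ b) : deltaLen a b ≤ N := by
  rw [deltaLen, if_neg h]
  exact ZMod.val_lt _

theorem deltaLen_right_injective {N : ℕ} [NeZero N] (a : ZMod N) :
    Function.Injective (deltaLen a) := by
  intro b c h
  by_cases hb : a = b <;> by_cases hc : a = c
  · exact hb.symm.trans hc
  · have := deltaLen_le_of_ne hc
    rw [← h, ← hb, deltaLen_self] at this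
    omega
  · have := deltaLen_le_of_ne hb
    rw [h, ← hc, deltaLen_self] at this
    omega
  · simp only [deltaLen, if_neg hb, if_neg hc, add_left_inj] at h
    exact sub_left_injective (ZMod.val_injective N h)

/-- Moving the end point of an edge that is not a loop lengthens the boundary path by one. -/
theorem deltaLen_add_one_right {N : ℕ} [Fact (1 < N)] {a b : ZMod N} (h : a ≠ b) :
    deltaLen a (b + 1) = deltaLen a b + 1 := by
  have : NeZero N := ⟨by have := Fact.out (p := 1 < N); omega⟩
  have hsub : b + 1 - a = (b - a) + 1 := by ring
  have hone : (1 : ZMod N).val = 1 := ZMod.val_one N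
  have hlt := ZMod.val_lt (b - a)
  rw [deltaLen, deltaLen, if_neg h]
  split_ifs with hab
  · have hzero : (b - a) + 1 = 0 := by rw [← hsub, ← hab, sub_self]
    by_contra hne
    have hval := ZMod.val_add_of_lt (a := b - a) (b := 1) (by omega)
    rw [hzero, ZMod.val_zero] at hval
    omega
  · have hlt' : (b - a).val + (1 : ZMod N).val < N := by
      by_contra hge
      have hval := ZMod.val_add (b - a) 1
      have : (b - a).val + (1 : ZMod N).val = N := by omega
      rw [this, Nat.mod_self, ← hsub, ZMod.val_eq_zero, sub_eq_zero] at hval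
      exact hab hval.symm
    rw [hsub, ZMod.val_add_of_lt hlt', hone]

/-- Moving the start point of an edge shortens the boundary path by one. -/
theorem deltaLen_add_one_left {N : ℕ} [Fact (1 < N)] {a b : ZMod N} (h : a + 1 ≠ b) :
    deltaLen (a + 1) b + 1 = deltaLen a b := by
  rw [← deltaLen_add_one_right h, ← deltaLen_sub_one, add_sub_cancel_right, add_sub_cancel_right]

theorem deltaLen_add_one_self {N : ℕ} [Fact (1 < N)] (a : ZMod N) : deltaLen a (a + 1) = 2 := by
  simp [deltaLen, ZMod.val_one N]

theorem deltaLen_eq_add_one_iff {N : ℕ} [NeZero N] {a b : ZMod N} :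
    deltaLen a b = N + 1 ↔ a = b := by
  rw [← deltaLen_self a, (deltaLen_right_injective a).eq_iff, eq_comm]

theorem TaggedEdge.eq_iff {N : ℕ} [NeZero N] {M : TaggedEdge N} {a b : ZMod N} {ε : ℤ} :
    M = ⟨a, b, ε⟩ ↔ M.a = a ∧ deltaLen M.a M.b = deltaLen a b ∧ M.ε = ε := by
  rw [TaggedEdge.ext_iff]
  constructor
  · rintro ⟨rfl, rfl, rfl⟩
    exact ⟨rfl, rfl, rfl⟩
  · rintro ⟨rfl, h, rfl⟩
    exact ⟨rfl, deltaLen_right_injective _ h, rfl⟩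

/-- An elementary move between tagged edges either fixes the start point and lengthens the boundary
path by one, or advances the start point and shortens the path by one; tags play no role. -/
theorem elemMove_iff {n N : ℕ} (hn : 3 ≤ n) (hN : n ≤ N) {M M' : TaggedEdge N}
    (hM : M ∈ Edges n N) (hM' : M' ∈ Edges n N) :
    ElemMove n N M M' ↔
      (M'.a = M.a ∧ deltaLen M'.a M'.b = deltaLen M.a M.b + 1) ∨
      (M'.a = M.a + 1 ∧ deltaLen M'.a M'.b + 1 = deltaLen M.a M.b) := by
  have : Fact (1 < N) := ⟨by omega⟩
  have : NeZero N := ⟨by omega⟩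
  obtain ⟨hlen, -, -⟩ := hM
  obtain ⟨hlen', hε, htag⟩ := hM'
  have hleft : deltaLen (M.a + 1) M.b + 1 = deltaLen M.a M.b := by
    refine deltaLen_add_one_left fun h => ?_
    rw [← h, deltaLen_add_one_self] at hlen
    omega
  have hloop := deltaLen_eq_add_one_iff (a := M.a) (b := M.b)
  have hloop' := deltaLen_eq_add_one_iff (a := M'.a) (b := M'.b)
  have hself := deltaLen_self M.a
  have hle (h : M.a ≠ M.b) := deltaLen_le_of_ne h
  have hle' (h : M'.a ≠ M'.b) := deltaLen_le_of_ne h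
  have hright (h : M.a ≠ M.b) := deltaLen_add_one_right h
  simp only [ElemMove, TaggedEdge.eq_iff]
  grind

theorem tr_mem_edges {n N : ℕ} {M : TaggedEdge N} (hM : M ∈ Edges n N) : tr M ∈ Edges n N := by
  obtain ⟨hlen, hε, htag⟩ := hM
  unfold tr
  split_ifs with h
  · exact ⟨by simpa [deltaLen_sub_one] using hlen, by dsimp only; omega, by simp [h]⟩
  · exact ⟨by simpa [deltaLen_sub_one] using hlen, hε, fun _ => htag h⟩

theorem tr_a {N : ℕ} (M : TaggedEdge N) : (tr M).a = M.a - 1 := by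
  unfold tr; split_ifs <;> rfl

theorem tr_b {N : ℕ} (M : TaggedEdge N) : (tr M).b = M.b - 1 := by
  unfold tr; split_ifs <;> rfl

theorem tr_bijective {N : ℕ} : Function.Bijective (tr (N := N)) := by
  refine Function.bijective_iff_has_inverse.2
    ⟨fun M => ⟨M.a + 1, M.b + 1, if M.a = M.b then -M.ε else M.ε⟩, fun M => ?_, fun M => ?_⟩
  · by_cases h : M.a = M.b <;> ext <;> simp [tr, h]
  · by_cases h : M.a = M.b <;> ext <;> simp [tr, h]

theorem tr_bijOn_edges (n N : ℕ) : Set.BijOn tr (Edges n N) (Edges n N) := by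
  refine ⟨fun _ => tr_mem_edges, tr_bijective.injective.injOn, fun M hM => ?_⟩
  obtain ⟨M, rfl⟩ := tr_bijective.surjective M
  refine ⟨M, ?_, rfl⟩
  obtain ⟨hlen, hε, htag⟩ := hM
  rw [tr_a, tr_b, deltaLen_sub_one] at hlen
  by_cases h : M.a = M.b
  · simp only [tr, if_pos h] at hε
    exact ⟨hlen, by omega, fun h' => absurd h h'⟩
  · simp only [tr, if_neg h] at hε htag
    exact ⟨hlen, hε, fun _ => htag (by simpa using h)⟩


/-- `(Γ_⊙, τ)` is a stable translation quiver: `τ` is a bijection of the vertex set `𝔈`,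
and the number of arrows `M → N` (here `0` or `1`, given by the existence of an elementary
move) equals the number of arrows `τ(N) → M`. -/
theorem gammaOdot_stable_translation_quiver (n p : ℕ) (hn : 3 ≤ n) (hp : 1 ≤ p) :
    Set.BijOn tr (Edges n (n * p)) (Edges n (n * p)) ∧
      ∀ M ∈ Edges n (n * p), ∀ N ∈ Edges n (n * p),
        (ElemMove n (n * p) M N ↔ ElemMove n (n * p) (tr N) M) := by
  have hN : n ≤ n * p := Nat.le_mul_of_pos_right n hp
  refine ⟨tr_bijOn_edges n (n * p), fun M hM N hN' => ?_⟩
  rw [elemMove_iff hn hN hM hN', elemMove_iff hn hN (tr_mem_edges hN') hM, tr_a, tr_b,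
    deltaLen_sub_one, sub_add_cancel, eq_sub_iff_add_eq]
  grind
end

section
/- The map φ_p is an isomorphism of stable translation quivers from (Γ_{n,p}, τ_{n,p}) to (Γ_⊙, τ): it is a bijection from the vertex set of Γ_{n,p} onto the set 𝔈 of tagged edges of P_{np}, there is an arrow (i,j) → (i′,j′) in Γ_{n,p} if and only if there is an arrow φ_p(i,j) → φ_p(i′,j′) in Γ_⊙, and φ_p ∘ τ_{n,p} = τ ∘ φ_p. -/
/-- Vertices of the translation quiver `Γ` with columns indexed by `ZMod N` and
levels `{0, 0̄, 1, …, m−2}`: the level `0` is `Sum.inl false`, the level `0̄` is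
`Sum.inl true`, and the level `j ∈ {1, …, m−2}` is `Sum.inr k` with `k = j − 1`. -/
abbrev GammaV (N m : ℕ) := ZMod N × (Bool ⊕ Fin (m - 2))

/-- The arrows of the quiver `Γ`: `(i,1)→(i,0)`, `(i,1)→(i,0̄)`, `(i,j)→(i,j−1)` for
`2 ≤ j ≤ m−2`, `(i,0)→(i+1,1)`, `(i,0̄)→(i+1,1)`, `(i,j−1)→(i+1,j)` for `2 ≤ j ≤ m−2`. -/
def GammaArrow (N m : ℕ) : GammaV N m → GammaV N m → Prop
  | (i, .inr j), (i', .inl _) => i' = i ∧ (j : ℕ) = 0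
  | (i, .inr j), (i', .inr j') =>
      (i' = i ∧ (j' : ℕ) + 1 = (j : ℕ)) ∨ (i' = i + 1 ∧ (j : ℕ) + 1 = (j' : ℕ))
  | (i, .inl _), (i', .inr j') => i' = i + 1 ∧ (j' : ℕ) = 0
  | (_, .inl _), (_, .inl _) => False

/-- The translation `τ(i,j) = (i−1,j)`, with the `0`/`0̄` switch at `i = 0` when `N` is odd. -/
def GammaTau (N m : ℕ) : GammaV N m → GammaV N m
  | (i, .inl e) => if Odd N ∧ i = 0 then (i - 1, .inl (!e)) else (i - 1, .inl e)
  | (i, .inr j) => (i - 1, .inr j)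

/-- The map `φ_p` from the vertices of `Γ_{n,p}` to tagged edges of `P_{np}`:
`φ_p(i,j) = M_{i+1, i+np+1−j}` for `j ∉ {0,0̄}` (here the level `j = k+1` is coded
by `Sum.inr k`), and `φ_p(i,j) = M_{i+1,i+1}^{±1}` for `j ∈ {0,0̄}`, the tag being `+1`
exactly when (`j = 0` and `i` is even) or (`j = 0̄` and `i` is odd). -/
def phi (n p : ℕ) : GammaV (n * p) n → TaggedEdge (n * p)
  | (i, .inr k) => ⟨i + 1, i + ((n * p + 1 - ((k : ℕ) + 1) : ℕ) : ZMod (n * p)), 1⟩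
  | (i, .inl e) => ⟨i + 1, i + 1, if (e = false ↔ Even i.val) then 1 else -1⟩

theorem natCast_zmod_inj {N x y : ℕ} (hx : x < N) (hy : y < N) :
    (x : ZMod N) = y ↔ x = y := by
  rw [ZMod.natCast_eq_natCast_iff', Nat.mod_eq_of_lt hx, Nat.mod_eq_of_lt hy]

theorem phi_inr {n p : ℕ} (hnp : n ≤ n * p) (i : ZMod (n * p)) (k : Fin (n - 2)) :
    phi n p (i, .inr k) = ⟨i + 1, i - ((k : ℕ) : ZMod (n * p)), 1⟩ := by
  have hk := k.isLt
  have h : n * p + 1 - ((k : ℕ) + 1) = n * p - k := by omega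
  simp only [phi, h]
  rw [Nat.cast_sub (by omega), ZMod.natCast_self, zero_sub, ← sub_eq_add_neg]

theorem add_one_ne_sub_natCast {N k : ℕ} (hk : k + 1 < N) (i : ZMod N) :
    i + 1 ≠ i - (k : ZMod N) := by
  intro h
  have h' : ((k + 1 : ℕ) : ZMod N) = (0 : ℕ) := by
    push_cast
    linear_combination h
  rw [natCast_zmod_inj hk (by omega)] at h'
  omega

theorem deltaLen_add_one_sub_natCast {N k : ℕ} (hk : k + 1 < N) (i : ZMod N) :
    deltaLen (i + 1) (i - (k : ZMod N)) = N - k := by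
  rw [deltaLen, if_neg (add_one_ne_sub_natCast hk i)]
  have h : i - (k : ZMod N) - (i + 1) = ((N - (k + 1) : ℕ) : ZMod N) := by
    rw [Nat.cast_sub hk.le, ZMod.natCast_self]
    push_cast
    ring
  rw [h, ZMod.val_natCast, Nat.mod_eq_of_lt (by omega)]
  omega

/-- An endpoint `b` of an arc starting at `a` is recovered from the length of the arc. -/
theorem eq_sub_natCast_of_ne {N : ℕ} [NeZero N] {a b : ZMod N} (hab : a ≠ b) :
    b = a - 1 - ((N - deltaLen a b : ℕ) : ZMod N) := by
  have hlt := ZMod.val_lt (b - a)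
  rw [deltaLen, if_neg hab, Nat.cast_sub (by omega), ZMod.natCast_self]
  push_cast
  rw [ZMod.natCast_zmod_val]
  ring

/-- Passing to the previous column changes the parity of the index, except when wrapping around
an odd number of columns. -/
theorem even_val_sub_one_iff {N : ℕ} (hN : 1 < N) (i : ZMod N) :
    Even (i - 1).val ↔ (Even i.val ↔ Odd N ∧ i = 0) := by
  have : NeZero N := ⟨by omega⟩
  have : Fact (1 < N) := ⟨hN⟩
  by_cases hi : i = 0
  · subst hi
    have h : (0 - 1 : ZMod N) = ((N - 1 : ℕ) : ZMod N) := by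
      rw [Nat.cast_sub hN.le, ZMod.natCast_self]
      simp
    rw [h, ZMod.val_natCast, Nat.mod_eq_of_lt (by omega)]
    simp only [ZMod.val_zero, Nat.even_iff, Nat.odd_iff, and_true, Nat.zero_mod, true_iff]
    omega
  · have hpos : i.val ≠ 0 := by simpa using hi
    have h : (i - 1).val = i.val - 1 := by
      rw [ZMod.val_sub (by rw [ZMod.val_one]; omega), ZMod.val_one]
    rw [h]
    simp only [hi, Nat.even_iff, and_false, iff_false]
    omega

theorem phi_inl_eq_iff {n p : ℕ} (i i' : ZMod (n * p)) (e e' : Bool) :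
    phi n p (i, .inl e) = phi n p (i', .inl e') ↔ i = i' ∧ e = e' := by
  constructor
  · intro h
    simp only [phi, TaggedEdge.mk.injEq, add_left_inj] at h
    obtain ⟨rfl, -, h⟩ := h
    refine ⟨rfl, ?_⟩
    by_cases hi : Even i.val <;> cases e <;> cases e' <;> simp_all
  · rintro ⟨rfl, rfl⟩
    rfl

theorem mk_sub_natCast_inj {N k k' : ℕ} (hk : k < N) (hk' : k' < N) (i i' : ZMod N) :
    (⟨i + 1, i - (k : ZMod N), 1⟩ : TaggedEdge N) = ⟨i' + 1, i' - (k' : ZMod N), 1⟩ ↔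
      i = i' ∧ k = k' := by
  rw [TaggedEdge.mk.injEq, add_left_inj, ← natCast_zmod_inj hk hk']
  constructor
  · rintro ⟨rfl, h, -⟩
    exact ⟨rfl, sub_right_injective h⟩
  · rintro ⟨rfl, h⟩
    exact ⟨rfl, by rw [h], rfl⟩

theorem mk_self_ne_mk_sub_natCast {N k : ℕ} (hk : k + 1 < N) (a i : ZMod N) (ε ε' : ℤ) :
    (⟨a, a, ε⟩ : TaggedEdge N) ≠ ⟨i + 1, i - (k : ZMod N), ε'⟩ := by
  intro h
  rw [TaggedEdge.mk.injEq] at h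
  exact add_one_ne_sub_natCast hk i (h.1.symm.trans h.2.1)

theorem phi_injective {n p : ℕ} (hnp : n ≤ n * p) : Function.Injective (phi n p) := by
  rintro ⟨i, e | k⟩ ⟨i', e' | k'⟩ h
  · obtain ⟨rfl, rfl⟩ := (phi_inl_eq_iff ..).1 h
    rfl
  · have := k'.isLt
    rw [phi_inr hnp] at h
    exact absurd h (mk_self_ne_mk_sub_natCast (by omega) _ _ _ _)
  · have := k.isLt
    rw [phi_inr hnp] at h
    exact absurd h.symm (mk_self_ne_mk_sub_natCast (by omega) _ _ _ _)
  · have := k.isLt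
    have := k'.isLt
    rw [phi_inr hnp, phi_inr hnp, mk_sub_natCast_inj (by omega) (by omega)] at h
    obtain ⟨rfl, hk⟩ := h
    rw [Fin.ext hk]

theorem phi_mem_edges {n p : ℕ} (hn : 3 ≤ n) (hnp : n ≤ n * p) (x : GammaV (n * p) n) :
    phi n p x ∈ Edges n (n * p) := by
  obtain ⟨i, e | k⟩ := x
  · refine ⟨?_, ?_, fun h => absurd rfl h⟩
    · simp only [phi, deltaLen_self]
      omega
    · simp only [phi]
      split_ifs <;> simp
  · have := k.isLt
    rw [phi_inr hnp]
    refine ⟨?_, Or.inl rfl, fun _ => rfl⟩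
    simp only
    rw [deltaLen_add_one_sub_natCast (by omega)]
    omega

theorem exists_phi_eq {n p : ℕ} (hn : 3 ≤ n) (hnp : n ≤ n * p) {M : TaggedEdge (n * p)}
    (hM : M ∈ Edges n (n * p)) : ∃ x, phi n p x = M := by
  have : NeZero (n * p) := ⟨by omega⟩
  obtain ⟨a, b, ε⟩ := M
  obtain ⟨hlen, hε, htag⟩ := hM
  simp only at hlen hε htag
  by_cases hab : a = b
  · subst hab
    by_cases he : Even (a - 1).val <;> obtain rfl | rfl := hε
    · exact ⟨(a - 1, .inl false), by simp [phi, he]⟩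
    · exact ⟨(a - 1, .inl true), by simp [phi, he]⟩
    · exact ⟨(a - 1, .inl true), by simp [phi, he]⟩
    · exact ⟨(a - 1, .inl false), by simp [phi, he]⟩
  · obtain rfl := htag hab
    refine ⟨(a - 1, .inr ⟨n * p - deltaLen a b, by omega⟩), ?_⟩
    rw [phi_inr hnp, ← eq_sub_natCast_of_ne hab, sub_add_cancel]

theorem gammaArrow_iff_elemMove {n p : ℕ} (hn : 3 ≤ n) (hnp : n ≤ n * p)
    (x y : GammaV (n * p) n) :
    GammaArrow (n * p) n x y ↔ ElemMove n (n * p) (phi n p x) (phi n p y) := by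
  obtain ⟨i, e | k⟩ := x <;> obtain ⟨i', e' | k'⟩ := y
  · have hne : (phi n p (i', .inl e')) ≠ ⟨i + 1 + 1, i + 1, 1⟩ := by
      have h := mk_self_ne_mk_sub_natCast (N := n * p) (k := 0) (by omega) (i' + 1) (i + 1)
        (phi n p (i', .inl e')).ε 1
      simpa [phi] using h
    simp only [GammaArrow, ElemMove, false_iff]
    rintro (h | h | h | h)
    · simp only [phi, deltaLen_self] at h
      omega
    · simp only [phi, deltaLen_self] at h
      omega
    · simp only [phi, deltaLen_self] at h
      omega
    · exact hne h.2
  · have hk' := k'.isLt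
    have hmove := mk_sub_natCast_inj (N := n * p) (k := k') (k' := 0) (by omega) (by omega) i' (i + 1)
    rw [Nat.cast_zero, sub_zero] at hmove
    simp only [GammaArrow, ElemMove]
    rw [phi_inr hnp, ← hmove]
    simp only [phi, deltaLen_self, true_and]
    constructor
    · exact fun h => Or.inr (Or.inr (Or.inr h))
    · rintro (h | h | h | h)
      · omega
      · omega
      · omega
      · exact h
  · have hk := k.isLt
    have hsign : (phi n p (i', .inl e')).ε = 1 ∨ (phi n p (i', .inl e')).ε = -1 :=
      (phi_mem_edges hn hnp (i', .inl e')).2.1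
    have hend : i' + 1 = i + 1 → i' + 1 = i - ((k : ℕ) : ZMod (n * p)) + 1 → (k : ℕ) = 0 := by
      intro h h'
      rw [← natCast_zmod_inj (N := n * p) (by omega) (by omega), Nat.cast_zero]
      linear_combination h' - h
    have hstart : i' + 1 = i + 1 + 1 → i' + 1 ≠ i - ((k : ℕ) : ZMod (n * p)) := by
      intro h h'
      refine add_one_ne_sub_natCast (N := n * p) (k := k + 1) (by omega) (i + 1) ?_
      push_cast
      linear_combination h' - h
    simp only [GammaArrow, ElemMove]
    rw [phi_inr hnp]
    simp only [phi] at hsign ⊢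
    simp only [deltaLen_add_one_sub_natCast (N := n * p) (k := k) (by omega), TaggedEdge.mk.injEq]
    constructor
    · rintro ⟨rfl, hk0⟩
      exact Or.inr (Or.inr (Or.inl ⟨by omega, Or.inr (by simpa using hsign)⟩))
    · rintro (⟨-, h, h', -⟩ | ⟨hlen, -, ⟨h, h', -⟩ | ⟨h, h', -⟩⟩ |
        ⟨hlen, ⟨h, h', -⟩ | ⟨h, -⟩ | ⟨h, -⟩⟩ | ⟨h, -⟩)
      · exact ⟨add_right_cancel h, hend h h'⟩
      · exact absurd h' (hstart h)
      · exact ⟨add_right_cancel h, hend h h'⟩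
      · exact absurd h' (hstart h)
      · exact ⟨add_right_cancel h, by omega⟩
      · exact ⟨add_right_cancel h, by omega⟩
      · exact absurd h (add_one_ne_sub_natCast (by omega) i)
  · have hk := k.isLt
    have hk' := k'.isLt
    have hend : (⟨i' + 1, i' - ((k' : ℕ) : ZMod (n * p)), 1⟩ : TaggedEdge (n * p)) =
        ⟨i + 1, i - ((k : ℕ) : ZMod (n * p)) + 1, 1⟩ ↔ i' = i ∧ (k' : ℕ) + 1 = k := by
      rw [← mk_sub_natCast_inj (N := n * p) (by omega) (by omega), Nat.cast_succ,
        ← sub_sub, TaggedEdge.mk.injEq, TaggedEdge.mk.injEq,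
        sub_eq_iff_eq_add (a := i' - ((k' : ℕ) : ZMod (n * p)))]
    have hstart : (⟨i' + 1, i' - ((k' : ℕ) : ZMod (n * p)), 1⟩ : TaggedEdge (n * p)) =
        ⟨i + 1 + 1, i - ((k : ℕ) : ZMod (n * p)), 1⟩ ↔ i' = i + 1 ∧ (k : ℕ) + 1 = k' := by
      rw [eq_comm (a := (k : ℕ) + 1), ← mk_sub_natCast_inj (N := n * p) (by omega) (by omega),
        Nat.cast_succ, add_sub_add_right_eq_sub]
    have hself (ε : ℤ) := (mk_self_ne_mk_sub_natCast (N := n * p) (k := k') (by omega)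
      (i + 1) i' ε 1).symm
    have hne := add_one_ne_sub_natCast (N := n * p) (k := k) (by omega) i
    simp only [GammaArrow, ElemMove]
    rw [phi_inr hnp, phi_inr hnp]
    simp only [deltaLen_add_one_sub_natCast (N := n * p) (k := k) (by omega), hend, hstart, hself,
      hne]
    grind

theorem phi_gammaTau {n p : ℕ} (hn : 3 ≤ n) (hnp : n ≤ n * p) (x : GammaV (n * p) n) :
    phi n p (GammaTau (n * p) n x) = tr (phi n p x) := by
  obtain ⟨i, e | k⟩ := x
  · have hpar := even_val_sub_one_iff (N := n * p) (by omega) i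
    simp only [GammaTau]
    by_cases hw : Odd (n * p) ∧ i = 0
    · rw [if_pos hw]
      simp only [iff_true_intro hw, iff_true] at hpar
      by_cases hi : Even i.val <;> cases e <;> simp [phi, tr, hpar, hi]
    · rw [if_neg hw]
      by_cases hi : Even i.val <;> cases e <;> simp [phi, tr, hpar, hw, hi]
  · have hk := k.isLt
    simp only [GammaTau]
    rw [phi_inr hnp, phi_inr hnp, tr, if_neg (add_one_ne_sub_natCast (by omega) i)]
    simp only [TaggedEdge.mk.injEq]
    exact ⟨by ring, by ring, trivial⟩

/-- `φ_p` is an isomorphism of stable translation quivers from `(Γ_{n,p}, τ_{n,p})` to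
`(Γ_⊙, τ)`: it is a bijection from the vertex set of `Γ_{n,p}` onto `𝔈`, there is an arrow
`x → y` in `Γ_{n,p}` iff there is an arrow (elementary move) `φ_p(x) → φ_p(y)` in `Γ_⊙`,
and `φ_p ∘ τ_{n,p} = τ ∘ φ_p`. -/
theorem phi_translation_quiver_iso (n p : ℕ) (hn : 3 ≤ n) (hp : 1 ≤ p) :
    Set.BijOn (phi n p) Set.univ (Edges n (n * p)) ∧
    (∀ x y : GammaV (n * p) n,
      (GammaArrow (n * p) n x y ↔ ElemMove n (n * p) (phi n p x) (phi n p y))) ∧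
    (∀ x : GammaV (n * p) n, phi n p (GammaTau (n * p) n x) = tr (phi n p x)) := by
  have hnp : n ≤ n * p := Nat.le_mul_of_pos_right n hp
  exact ⟨⟨fun x _ => phi_mem_edges hn hnp x, (phi_injective hnp).injOn,
    fun M hM => (exists_phi_eq hn hnp hM).imp fun x hx => ⟨Set.mem_univ x, hx⟩⟩,
    gammaArrow_iff_elemMove hn hnp, phi_gammaTau hn hnp⟩
end
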